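/- arXiv:2305.01811 — 2 statements merged into one kernel-verified Lean document; each statement's English description precedes it below -/
import Mathlib

section
/- Suppose that for i = 1,2 the closed-loop subsystem matrices A^i + B^i F^i are symmetric and Hurwitz (every complex eigenvalue has strictly negative real part), and that K has full column rank (K z ≠ 0 for every nonzero z ∈ ℝ^{n1+n2−k}). Then the composite closed-loop system matrix 𝒜 + ℬ F̄ K = K^T (Ā + B̄ F̄) K is symmetric and negative definite (z̄^T (𝒜 + ℬ F̄ K) z̄ < 0 for all nonzero z̄); in particular it is Hurwitz, so the composite closed-loop system ẋ̄ = (𝒜 + ℬ F̄ K) x̄ is asymptotically stable. -/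
open Matrix

/-- A real square matrix is Hurwitz if every complex eigenvalue has strictly
negative real part. -/
def IsHurwitz {n : Type*} [Fintype n] [DecidableEq n] (M : Matrix n n ℝ) : Prop :=
  ∀ μ ∈ spectrum ℂ (M.map (Complex.ofReal ·)), μ.re < 0

/-!
A real symmetric matrix has real spectrum, so for it being Hurwitz and being negative definite are
the same thing. The characteristic polynomial of a block diagonal matrix is the product of those
of its blocks, which makes `Ā + B̄ F̄` Hurwitz. Negative definiteness, unlike being Hurwitz,
survives the congruence `M ↦ Kᵀ M K` whenever `K` is injective.
-/

theorem posDef_neg_iff_isSymm_and_dotProduct_mulVec_neg {n R : Type*} [Fintype n] [Ring R]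
    [PartialOrder R] [IsOrderedAddMonoid R] [StarRing R] [TrivialStar R] {M : Matrix n n R} :
    (-M).PosDef ↔ M.IsSymm ∧ ∀ z : n → R, z ≠ 0 → z ⬝ᵥ (M *ᵥ z) < 0 := by
  simp [posDef_iff_dotProduct_mulVec, IsSymm.ext_iff, neg_mulVec]

open scoped ComplexOrder in
theorem posDef_neg_iff_eigenvalues_neg {n 𝕜 : Type*} [Fintype n] [DecidableEq n] [RCLike 𝕜]
    {A : Matrix n n 𝕜} (hA : A.IsHermitian) : (-A).PosDef ↔ ∀ i, hA.eigenvalues i < 0 := by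
  conv_lhs => rw [hA.spectral_theorem, ← map_neg, diagonal_neg]
  simp [Unitary.isUnit_coe.posDef_star_right_conjugate_iff]

section Hurwitz

variable {n : Type*} [Fintype n] [DecidableEq n] {M : Matrix n n ℝ}

theorem isHurwitz_iff_forall_aeval_charpoly :
    IsHurwitz M ↔ ∀ μ : ℂ, Polynomial.aeval μ M.charpoly = 0 → μ.re < 0 := by
  refine forall_congr' fun μ ↦ imp_congr_left ?_
  change μ ∈ spectrum ℂ (M.map (algebraMap ℝ ℂ)) ↔ _
  rw [mem_spectrum_iff_isRoot_charpoly, charpoly_map, Polynomial.IsRoot.def,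
    Polynomial.eval_map_algebraMap]

theorem isHurwitz_iff_eigenvalues_neg (hM : M.IsHermitian) :
    IsHurwitz M ↔ ∀ i, hM.eigenvalues i < 0 := by
  simp [isHurwitz_iff_forall_aeval_charpoly, hM.charpoly_eq, Finset.prod_eq_zero_iff, sub_eq_zero]

theorem isHurwitz_iff_posDef_neg (hM : M.IsSymm) : IsHurwitz M ↔ (-M).PosDef := by
  have hM' : M.IsHermitian := isHermitian_iff_isSymm.2 hM
  rw [isHurwitz_iff_eigenvalues_neg hM', posDef_neg_iff_eigenvalues_neg hM']

end Hurwitz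

theorem isHurwitz_fromBlocks_zero₁₂_iff {m n : Type*} [Fintype m] [Fintype n]
    [DecidableEq m] [DecidableEq n] {A : Matrix m m ℝ} {C : Matrix n m ℝ} {D : Matrix n n ℝ} :
    IsHurwitz (fromBlocks A 0 C D) ↔ IsHurwitz A ∧ IsHurwitz D := by
  simp only [isHurwitz_iff_forall_aeval_charpoly, charpoly_fromBlocks_zero₁₂, map_mul,
    mul_eq_zero, or_imp, forall_and]

theorem IsHurwitz.posDef_neg_transpose_mul_mul {n p : Type*} [Fintype n] [Fintype p]
    [DecidableEq n] {M : Matrix n n ℝ} {K : Matrix n p ℝ}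
    (hM : IsHurwitz M) (hsymm : M.IsSymm) (hK : Function.Injective K.mulVec) :
    (-(Kᵀ * M * K)).PosDef := by
  have hneg : (-M).PosDef := (isHurwitz_iff_posDef_neg hsymm).1 hM
  simpa using hneg.conjTranspose_mul_mul_same hK

theorem mul_fromBlocks_mul_add_mul_fromBlocks_mul {R l n₁ n₂ m₁ m₂ q₁ q₂ p : Type*}
    [NonUnitalSemiring R] [Fintype n₁] [Fintype n₂] [Fintype m₁] [Fintype m₂] [Fintype q₁]
    [Fintype q₂] (L : Matrix l (n₁ ⊕ n₂) R) (K : Matrix (q₁ ⊕ q₂) p R)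
    (A₁ : Matrix n₁ q₁ R) (A₂ : Matrix n₂ q₂ R) (B₁ : Matrix n₁ m₁ R) (B₂ : Matrix n₂ m₂ R)
    (F₁ : Matrix m₁ q₁ R) (F₂ : Matrix m₂ q₂ R) :
    L * fromBlocks A₁ 0 0 A₂ * K + L * fromBlocks B₁ 0 0 B₂ * (fromBlocks F₁ 0 0 F₂ * K) =
      L * fromBlocks (A₁ + B₁ * F₁) 0 0 (A₂ + B₂ * F₂) * K := by
  have hblocks : fromBlocks (A₁ + B₁ * F₁) 0 0 (A₂ + B₂ * F₂) =
      fromBlocks A₁ 0 0 A₂ + fromBlocks B₁ 0 0 B₂ * fromBlocks F₁ 0 0 F₂ := by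
    simp [fromBlocks_multiply, fromBlocks_add]
  simp only [hblocks, Matrix.mul_add, Matrix.add_mul, Matrix.mul_assoc]

theorem composite_closed_loop_stability_general {n₁ n₂ m₁ m₂ p : Type*}
    [Fintype n₁] [Fintype n₂] [Fintype m₁] [Fintype m₂] [Fintype p]
    [DecidableEq n₁] [DecidableEq n₂] [DecidableEq p]
    (A₁ : Matrix n₁ n₁ ℝ) (A₂ : Matrix n₂ n₂ ℝ) (B₁ : Matrix n₁ m₁ ℝ) (B₂ : Matrix n₂ m₂ ℝ)
    (F₁ : Matrix m₁ n₁ ℝ) (F₂ : Matrix m₂ n₂ ℝ) (K : Matrix (n₁ ⊕ n₂) p ℝ)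
    (hsymm₁ : (A₁ + B₁ * F₁).IsSymm) (hsymm₂ : (A₂ + B₂ * F₂).IsSymm)
    (hhur₁ : IsHurwitz (A₁ + B₁ * F₁)) (hhur₂ : IsHurwitz (A₂ + B₂ * F₂))
    (hK : ∀ z : p → ℝ, z ≠ 0 → K *ᵥ z ≠ 0)
    (M : Matrix p p ℝ)
    (hM : M = Kᵀ * fromBlocks A₁ 0 0 A₂ * K +
      Kᵀ * fromBlocks B₁ 0 0 B₂ * (fromBlocks F₁ 0 0 F₂ * K)) :
    M.IsSymm ∧ (∀ z : p → ℝ, z ≠ 0 → z ⬝ᵥ (M *ᵥ z) < 0) ∧ IsHurwitz M := by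
  have hinj : Function.Injective K.mulVec :=
    (injective_iff_map_eq_zero K.mulVecLin).2 fun z ↦ not_imp_not.1 (hK z)
  have hhur : IsHurwitz (fromBlocks (A₁ + B₁ * F₁) 0 0 (A₂ + B₂ * F₂)) :=
    isHurwitz_fromBlocks_zero₁₂_iff.2 ⟨hhur₁, hhur₂⟩
  have hneg : (-M).PosDef := by
    rw [hM, mul_fromBlocks_mul_add_mul_fromBlocks_mul]
    exact hhur.posDef_neg_transpose_mul_mul (hsymm₁.fromBlocks transpose_zero hsymm₂) hinj
  obtain ⟨hsymm, hquad⟩ := posDef_neg_iff_isSymm_and_dotProduct_mulVec_neg.1 hneg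
  exact ⟨hsymm, hquad, (isHurwitz_iff_posDef_neg hsymm).2 hneg⟩

/-- If the closed-loop subsystem matrices `Aⁱ + Bⁱ Fⁱ` are symmetric and
Hurwitz and `K` has full column rank, then the composite closed-loop system matrix
`𝒜 + ℬ F̄ K = Kᵀ (Ā + B̄ F̄) K` is symmetric and negative definite, and in particular
Hurwitz, so the composite closed-loop system is asymptotically stable. -/
theorem composite_closed_loop_stability
    (n1 n2 m1 m2 k : ℕ) (hk : k ≤ min n1 n2)
    (A1 : Matrix (Fin n1) (Fin n1) ℝ) (A2 : Matrix (Fin n2) (Fin n2) ℝ)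
    (B1 : Matrix (Fin n1) (Fin m1) ℝ) (B2 : Matrix (Fin n2) (Fin m2) ℝ)
    (F1 : Matrix (Fin m1) (Fin n1) ℝ) (F2 : Matrix (Fin m2) (Fin n2) ℝ)
    (K : Matrix (Fin n1 ⊕ Fin n2) (Fin (n1 + n2 - k)) ℝ)
    (hsym1 : (A1 + B1 * F1)ᵀ = A1 + B1 * F1)
    (hsym2 : (A2 + B2 * F2)ᵀ = A2 + B2 * F2)
    (hhur1 : IsHurwitz (A1 + B1 * F1))
    (hhur2 : IsHurwitz (A2 + B2 * F2))
    (hK : ∀ z : Fin (n1 + n2 - k) → ℝ, z ≠ 0 → K *ᵥ z ≠ 0)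
    (Abar : Matrix (Fin n1 ⊕ Fin n2) (Fin n1 ⊕ Fin n2) ℝ)
    (hA : Abar = Matrix.fromBlocks A1 0 0 A2)
    (Bbar : Matrix (Fin n1 ⊕ Fin n2) (Fin m1 ⊕ Fin m2) ℝ)
    (hB : Bbar = Matrix.fromBlocks B1 0 0 B2)
    (Fbar : Matrix (Fin m1 ⊕ Fin m2) (Fin n1 ⊕ Fin n2) ℝ)
    (hF : Fbar = Matrix.fromBlocks F1 0 0 F2)
    (Acal : Matrix (Fin (n1 + n2 - k)) (Fin (n1 + n2 - k)) ℝ)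
    (hAcal : Acal = Kᵀ * Abar * K)
    (Bcal : Matrix (Fin (n1 + n2 - k)) (Fin m1 ⊕ Fin m2) ℝ)
    (hBcal : Bcal = Kᵀ * Bbar) :
    (Acal + Bcal * (Fbar * K))ᵀ = Acal + Bcal * (Fbar * K) ∧
    (∀ z : Fin (n1 + n2 - k) → ℝ, z ≠ 0 →
      z ⬝ᵥ ((Acal + Bcal * (Fbar * K)) *ᵥ z) < 0) ∧
    IsHurwitz (Acal + Bcal * (Fbar * K)) := by
  subst hA hB hF hAcal hBcal
  exact composite_closed_loop_stability_general A1 A2 B1 B2 F1 F2 K hsym1 hsym2 hhur1 hhur2 hK _ rfl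
end

section
/- The matrix X = P̄ K ∈ ℝ^{(n1+n2)×(n1+n2−k)}, built from the symmetric positive semidefinite solutions P^1, P^2 of the subsystem algebraic Riccati equations, is a solution of the Generalized Algebraic Riccati equation 0 = −X^T Ā K − K^T Ā^T X − 𝒬 + X^T B̄ R̄^{-1} B̄^T X. -/
open Matrix

/-!
With `X = P * K` and `P` symmetric, the generalized Riccati residual of `X` is the congruence
`Kᵀ * ρ * K` of the ordinary Riccati residual `ρ` of `P`. For decoupled subsystems `ρ` is block
diagonal, its blocks being the residuals of the subsystems, so it vanishes as soon as they do.
-/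

section Residual

variable {α l n m : Type*} [CommRing α] [Fintype n] [Fintype m] [DecidableEq m]

/-- The right-hand side of the algebraic Riccati equation with drift `A`, input matrix `B`, state
cost `Q` and input cost `R`, evaluated at `P` (with the junk value `R⁻¹ = 0` if `R` is
singular). -/
noncomputable def riccatiResidual (A : Matrix n n α) (B : Matrix n m α) (Q : Matrix n n α)
    (R : Matrix m m α) (P : Matrix n n α) : Matrix n n α :=
  -(P * A) - Aᵀ * P - Q + P * B * R⁻¹ * Bᵀ * P

/-- The right-hand side of the generalized algebraic Riccati equation with composition matrix `K`,
evaluated at `X`. The cost `Q` lives on the domain of `K`, whereas `A` and `B` describe the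
dynamics on its codomain. -/
noncomputable def generalizedRiccatiResidual (A : Matrix n n α) (B : Matrix n m α)
    (K : Matrix n l α) (Q : Matrix l l α) (R : Matrix m m α) (X : Matrix n l α) : Matrix l l α :=
  -(Xᵀ * A * K) - Kᵀ * Aᵀ * X - Q + Xᵀ * B * R⁻¹ * Bᵀ * X

theorem generalizedRiccatiResidual_mul_right (A : Matrix n n α) (B : Matrix n m α)
    (K : Matrix n l α) (Q : Matrix n n α) (R : Matrix m m α) {P : Matrix n n α} (hP : P.IsSymm) :
    generalizedRiccatiResidual A B K (Kᵀ * Q * K) R (P * K) =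
      Kᵀ * riccatiResidual A B Q R P * K := by
  simp only [generalizedRiccatiResidual, riccatiResidual, transpose_mul, hP.eq, Matrix.mul_add,
    Matrix.add_mul, Matrix.mul_sub, Matrix.sub_mul, Matrix.mul_neg, Matrix.neg_mul,
    Matrix.mul_assoc]

end Residual

section BlockDiagonal

variable {α l n₁ n₂ m₁ m₂ : Type*} [CommRing α] [Fintype n₁] [Fintype n₂]
  [Fintype m₁] [Fintype m₂] [DecidableEq m₁] [DecidableEq m₂]
  {R₁ : Matrix m₁ m₁ α} {R₂ : Matrix m₂ m₂ α}

theorem riccatiResidual_fromBlocks_diagonal (A₁ : Matrix n₁ n₁ α) (A₂ : Matrix n₂ n₂ α)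
    (B₁ : Matrix n₁ m₁ α) (B₂ : Matrix n₂ m₂ α) (Q₁ : Matrix n₁ n₁ α) (Q₂ : Matrix n₂ n₂ α)
    (hR : IsUnit R₁ ↔ IsUnit R₂) (P₁ : Matrix n₁ n₁ α) (P₂ : Matrix n₂ n₂ α) :
    riccatiResidual (fromBlocks A₁ 0 0 A₂) (fromBlocks B₁ 0 0 B₂) (fromBlocks Q₁ 0 0 Q₂)
        (fromBlocks R₁ 0 0 R₂) (fromBlocks P₁ 0 0 P₂) =
      fromBlocks (riccatiResidual A₁ B₁ Q₁ R₁ P₁) 0 0 (riccatiResidual A₂ B₂ Q₂ R₂ P₂) := by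
  have hRinv : (fromBlocks R₁ 0 0 R₂)⁻¹ = fromBlocks R₁⁻¹ 0 0 R₂⁻¹ := by
    simp [inv_fromBlocks_zero₂₁_of_isUnit_iff _ _ _ hR]
  simp [riccatiResidual, hRinv, fromBlocks_transpose, fromBlocks_multiply, fromBlocks_neg,
    fromBlocks_add, sub_eq_add_neg]

theorem PbarK_solves_generalized_riccati_general {A₁ : Matrix n₁ n₁ α} {A₂ : Matrix n₂ n₂ α}
    {B₁ : Matrix n₁ m₁ α} {B₂ : Matrix n₂ m₂ α} (K : Matrix (n₁ ⊕ n₂) l α)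
    {Q₁ : Matrix n₁ n₁ α} {Q₂ : Matrix n₂ n₂ α} (hR₁ : IsUnit R₁) (hR₂ : IsUnit R₂)
    {P₁ : Matrix n₁ n₁ α} {P₂ : Matrix n₂ n₂ α} (hP₁ : P₁.IsSymm) (hP₂ : P₂.IsSymm)
    (hric₁ : riccatiResidual A₁ B₁ Q₁ R₁ P₁ = 0) (hric₂ : riccatiResidual A₂ B₂ Q₂ R₂ P₂ = 0) :
    generalizedRiccatiResidual (fromBlocks A₁ 0 0 A₂) (fromBlocks B₁ 0 0 B₂) K
      (Kᵀ * fromBlocks Q₁ 0 0 Q₂ * K) (fromBlocks R₁ 0 0 R₂) (fromBlocks P₁ 0 0 P₂ * K) = 0 := by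
  have hP : (fromBlocks P₁ 0 0 P₂).IsSymm := hP₁.fromBlocks transpose_zero hP₂
  rw [generalizedRiccatiResidual_mul_right _ _ _ _ _ hP,
    riccatiResidual_fromBlocks_diagonal _ _ _ _ _ _ (iff_of_true hR₁ hR₂), hric₁, hric₂,
    fromBlocks_zero, Matrix.mul_zero, Matrix.zero_mul]

end BlockDiagonal

/-- `X = P̄ K`, built from the symmetric positive semidefinite solutions
of the subsystem algebraic Riccati equations, solves the Generalized Algebraic Riccati
equation `0 = −Xᵀ Ā K − Kᵀ Āᵀ X − 𝒬 + Xᵀ B̄ R̄⁻¹ B̄ᵀ X`. -/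
theorem PbarK_solves_generalized_riccati
    (n1 n2 m1 m2 k : ℕ) (hk : k ≤ min n1 n2)
    (A1 : Matrix (Fin n1) (Fin n1) ℝ) (A2 : Matrix (Fin n2) (Fin n2) ℝ)
    (B1 : Matrix (Fin n1) (Fin m1) ℝ) (B2 : Matrix (Fin n2) (Fin m2) ℝ)
    (K : Matrix (Fin n1 ⊕ Fin n2) (Fin (n1 + n2 - k)) ℝ)
    (Q1 : Matrix (Fin n1) (Fin n1) ℝ) (Q2 : Matrix (Fin n2) (Fin n2) ℝ)
    (R1 : Matrix (Fin m1) (Fin m1) ℝ) (R2 : Matrix (Fin m2) (Fin m2) ℝ)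
    (hQ1 : Q1.PosSemidef) (hQ2 : Q2.PosSemidef)
    (hR1 : R1.PosDef) (hR2 : R2.PosDef)
    (P1 : Matrix (Fin n1) (Fin n1) ℝ) (P2 : Matrix (Fin n2) (Fin n2) ℝ)
    (hP1 : P1.PosSemidef) (hP2 : P2.PosSemidef)
    (hric1 : (0 : Matrix (Fin n1) (Fin n1) ℝ)
      = -(P1 * A1) - A1ᵀ * P1 - Q1 + P1 * B1 * R1⁻¹ * B1ᵀ * P1)
    (hric2 : (0 : Matrix (Fin n2) (Fin n2) ℝ)
      = -(P2 * A2) - A2ᵀ * P2 - Q2 + P2 * B2 * R2⁻¹ * B2ᵀ * P2)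
    (Abar : Matrix (Fin n1 ⊕ Fin n2) (Fin n1 ⊕ Fin n2) ℝ)
    (hA : Abar = Matrix.fromBlocks A1 0 0 A2)
    (Bbar : Matrix (Fin n1 ⊕ Fin n2) (Fin m1 ⊕ Fin m2) ℝ)
    (hB : Bbar = Matrix.fromBlocks B1 0 0 B2)
    (Rbar : Matrix (Fin m1 ⊕ Fin m2) (Fin m1 ⊕ Fin m2) ℝ)
    (hR : Rbar = Matrix.fromBlocks R1 0 0 R2)
    (Qcal : Matrix (Fin (n1 + n2 - k)) (Fin (n1 + n2 - k)) ℝ)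
    (hQcal : Qcal = Kᵀ * (Matrix.fromBlocks Q1 0 0 Q2) * K)
    (Pbar : Matrix (Fin n1 ⊕ Fin n2) (Fin n1 ⊕ Fin n2) ℝ)
    (hP : Pbar = Matrix.fromBlocks P1 0 0 P2)
    (X : Matrix (Fin n1 ⊕ Fin n2) (Fin (n1 + n2 - k)) ℝ)
    (hX : X = Pbar * K) :
    (0 : Matrix (Fin (n1 + n2 - k)) (Fin (n1 + n2 - k)) ℝ)
      = -(Xᵀ * Abar * K) - Kᵀ * Abarᵀ * X - Qcal + Xᵀ * Bbar * Rbar⁻¹ * Bbarᵀ * X := by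
  subst hA hB hR hQcal hP hX
  exact (PbarK_solves_generalized_riccati_general K hR1.isUnit hR2.isUnit
    (isHermitian_iff_isSymm.mp hP1.isHermitian)
    (isHermitian_iff_isSymm.mp hP2.isHermitian) hric1.symm hric2.symm).symm
end
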